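/- arXiv:1604.01984 — 2 statements merged into one kernel-verified Lean document; each statement's English description precedes it below -/
import Mathlib

section
/- Let (X_1,…,X_r) have the GEV_r density f_r with parameters μ ∈ ℝ, σ > 0, ξ ≠ 0. Then for every j with 1 ≤ j ≤ r, E[(log(1+ξ Z_j))²] = ξ² Γ″(j)/Γ(j), where Γ″ denotes the second derivative of the Gamma function; in particular this expectation is finite. -/
open MeasureTheory ProbabilityTheory Real Filter Topology

/-- The joint density of the `r` largest order statistics limit (GEV_r) with
location `μ`, scale `σ`, and shape `ξ ≠ 0`.  The coordinates are in decreasing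
order: `x 0` is `x_1` (the largest) and `x ⟨r-1,_⟩` is `x_r`. -/
noncomputable def gevrDensity (μ σ ξ : ℝ) (r : ℕ) (x : Fin r → ℝ) : ℝ :=
  if h : 0 < r ∧ StrictAnti x ∧ (∀ j, 0 < 1 + ξ * ((x j - μ) / σ)) then
    (σ ^ r)⁻¹ * Real.exp
      (-(1 + ξ * ((x ⟨r - 1, Nat.sub_lt h.1 Nat.one_pos⟩ - μ) / σ)) ^ (-1 / ξ)
        - (1 / ξ + 1) * ∑ j, Real.log (1 + ξ * ((x j - μ) / σ)))
  else 0

/-- The GEV_r probability measure on `ℝ^r`, given by the density `gevrDensity`. -/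
noncomputable def gevrMeasure (μ σ ξ : ℝ) (r : ℕ) : Measure (Fin r → ℝ) :=
  MeasureTheory.volume.withDensity fun x => ENNReal.ofReal (gevrDensity μ σ ξ r x)

noncomputable def chainP (T : ℝ → ℝ) (W : ℝ → ENNReal) (n : ℕ) (x : Fin (n+1) → ℝ) : ENNReal :=
  (∏ i, W (x i)) * ∏ i : Fin n, (if T (x i.castSucc) < T (x i.succ) then 1 else 0)

lemma measurable_chainP {T : ℝ → ℝ} {W : ℝ → ENNReal} (hT : Measurable T) (hW : Measurable W)
    (n : ℕ) : Measurable (chainP T W n) := by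
  unfold chainP
  refine Measurable.mul ?_ ?_
  · exact Finset.measurable_prod _ fun i _ => hW.comp (measurable_pi_apply i)
  · refine Finset.measurable_prod _ fun i _ => Measurable.ite ?_ measurable_const measurable_const
    exact measurableSet_lt (hT.comp (measurable_pi_apply _)) (hT.comp (measurable_pi_apply _))

lemma chainP_succ (T : ℝ → ℝ) (W : ℝ → ENNReal) (n : ℕ) (z : Fin (n+2) → ℝ) :
    chainP T W (n+1) z = chainP T W n (fun i => z i.castSucc) *
      (W (z (Fin.last _)) * if T (z (Fin.last n).castSucc) < T (z (Fin.last _)) then 1 else 0) := by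
  unfold chainP
  rw [Fin.prod_univ_castSucc (fun i => W (z i)),
    Fin.prod_univ_castSucc (fun i : Fin (n+1) => (if T (z i.castSucc) < T (z i.succ) then (1:ENNReal) else 0))]
  simp only [Fin.succ_castSucc, Fin.succ_last]
  ring

lemma chain_step {T : ℝ → ℝ} {W : ℝ → ENNReal} (hT : Measurable T) (hW : Measurable W)
    (hT0 : ∀ x, 0 ≤ T x)
    (hcv : ∀ h : ℝ → ENNReal, Measurable h → ∫⁻ x, W x * h (T x) = ∫⁻ t in Set.Ioi 0, h t)
    (n : ℕ) (F : (Fin (n+1) → ℝ) → ENNReal) (hF : Measurable F)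
    (h : ℝ → ENNReal) (hh : Measurable h) :
    ∫⁻ x : Fin (n+2) → ℝ, chainP T W (n+1) x * (F (fun i => x i.castSucc) * h (T (x (Fin.last _))))
      = ∫⁻ x : Fin (n+1) → ℝ, chainP T W n x *
          (F x * ∫⁻ t in Set.Ioi (T (x (Fin.last _))), h t) := by
  have mp := (volume_preserving_piFinSuccAbove (fun _ : Fin (n+2) => ℝ) (Fin.last (n+1))).symm
  have hm : Measurable fun x : Fin (n+2) → ℝ =>
      chainP T W (n+1) x * (F (fun i => x i.castSucc) * h (T (x (Fin.last _)))) := by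
    refine (measurable_chainP hT hW _).mul ((hF.comp ?_).mul (hh.comp (hT.comp (measurable_pi_apply _))))
    exact measurable_pi_lambda _ fun i => measurable_pi_apply _
  rw [← mp.lintegral_comp hm]
  rw [Measure.volume_eq_prod]
  refine (lintegral_prod_symm' _ (hm.comp (MeasurableEquiv.measurable _))).trans ?_
  congr 1
  ext x
  have e1 : ∀ y, ∀ i : Fin (n+1), ((MeasurableEquiv.piFinSuccAbove (fun _ : Fin (n+2) => ℝ) (Fin.last (n+1))).symm (y, x)) i.castSucc = x i := by
      intro y i; simp [MeasurableEquiv.piFinSuccAbove]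
  have e2 : ∀ y, ((MeasurableEquiv.piFinSuccAbove (fun _ : Fin (n+2) => ℝ) (Fin.last (n+1))).symm (y, x)) (Fin.last (n+1)) = y := by
      intro y
      simp [MeasurableEquiv.piFinSuccAbove]
  simp only [Function.comp_def, chainP_succ, e1, e2]
  set c := T (x (Fin.last n))
  have hh' : Measurable ((Set.Ioi c).indicator h) := hh.indicator measurableSet_Ioi
  calc _ = ∫⁻ y, (chainP T W n x * F x) * (W y * (Set.Ioi c).indicator h (T y)) := by
        congr 1; ext y
        by_cases hc : c < T y <;> simp [Set.indicator, hc]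
        ring
    _ = _ := by
      rw [lintegral_const_mul _ (show Measurable fun y => W y * (Set.Ioi c).indicator h (T y) from
        hW.mul (hh'.comp hT)), hcv _ hh', setLIntegral_indicator measurableSet_Ioi,
        Set.Ioi_inter_Ioi, sup_of_le_left (hT0 _), mul_assoc]

lemma tonelli_step (h : ℝ → ENNReal) (hh : Measurable h) (n : ℕ) :
    ∫⁻ s in Set.Ioi 0, (∫⁻ t in Set.Ioi s, h t) * ENNReal.ofReal (s^n / n.factorial)
      = ∫⁻ t in Set.Ioi 0, h t * ENNReal.ofReal (t^(n+1) / (n+1).factorial) := by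
  have h1 : ∀ s, (∫⁻ t in Set.Ioi s, h t) * ENNReal.ofReal (s^n / n.factorial)
      = ∫⁻ t, (if s < t then h t * ENNReal.ofReal (s^n / n.factorial) else 0) := by
    intro s
    rw [← lintegral_mul_const _ hh, ← lintegral_indicator measurableSet_Ioi]
    congr 1
  simp only [h1]
  rw [lintegral_lintegral_swap]
  · rw [← lintegral_indicator measurableSet_Ioi]
    congr 1; ext t
    have h2 : ∀ s, (if s < t then h t * ENNReal.ofReal (s^n / n.factorial) else 0) =
        h t * (Set.Iio t).indicator (fun s => ENNReal.ofReal (s^n / n.factorial)) s := by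
      intro s; by_cases hs : s < t <;> simp [hs]
    simp only [h2]
    rw [lintegral_const_mul _ (Measurable.indicator (by fun_prop) measurableSet_Iio),
      setLIntegral_indicator measurableSet_Iio, Set.Iio_inter_Ioi]
    by_cases ht : 0 < t
    · rw [Set.indicator_of_mem (by exact ht)]
      congr 1
      rw [← ofReal_integral_eq_lintegral_ofReal]
      · congr 1
        rw [← integral_Ioc_eq_integral_Ioo, ← intervalIntegral.integral_of_le ht.le]
        rw [intervalIntegral.integral_div, integral_pow, Nat.factorial_succ]
        push_cast
        have : (n.factorial : ℝ) ≠ 0 := by positivity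
        field_simp
        simp
      · exact ((Continuous.integrableOn_Icc (by fun_prop)).mono_set Set.Ioo_subset_Icc_self)
      · refine (ae_restrict_iff' measurableSet_Ioo).2 (ae_of_all _ fun s hs => ?_)
        have := hs.1
        simp only [Pi.zero_apply]
        positivity
    · rw [Set.indicator_of_notMem (by exact ht), Set.Ioo_eq_empty ht]
      simp
  · apply Measurable.aemeasurable
    exact Measurable.ite (measurableSet_lt measurable_fst measurable_snd) (by fun_prop) measurable_const

lemma chain_last {T : ℝ → ℝ} {W : ℝ → ENNReal} (hT : Measurable T) (hW : Measurable W)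
    (hT0 : ∀ x, 0 ≤ T x)
    (hcv : ∀ h : ℝ → ENNReal, Measurable h → ∫⁻ x, W x * h (T x) = ∫⁻ t in Set.Ioi 0, h t)
    (n : ℕ) : ∀ (h : ℝ → ENNReal), Measurable h → 
    ∫⁻ x : Fin (n+1) → ℝ, chainP T W n x * h (T (x (Fin.last _)))
      = ∫⁻ t in Set.Ioi 0, h t * ENNReal.ofReal (t^n / n.factorial) := by
  induction n with
  | zero =>
    intro h hh
    have mp := (volume_preserving_funUnique (Fin 1) ℝ).symm
    refine (mp.lintegral_comp ((measurable_chainP hT hW _).mul (hh.comp (hT.comp (measurable_pi_apply _))))).symm.trans ?_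
    simpa [chainP] using hcv h hh
  | succ n ih =>
    intro h hh
    have := chain_step hT hW hT0 hcv n (fun _ => 1) measurable_const h hh
    simp only [one_mul] at this
    rw [this, ih (fun c => ∫⁻ t in Set.Ioi c, h t), tonelli_step h hh]
    have : Antitone (fun c => ∫⁻ t in Set.Ioi c, h t) := fun a b hab =>
      lintegral_mono_set (Set.Ioi_subset_Ioi hab)
    exact this.measurable

lemma chain_marg {T : ℝ → ℝ} {W : ℝ → ENNReal} (hT : Measurable T) (hW : Measurable W)
    (hT0 : ∀ x, 0 ≤ T x)
    (hcv : ∀ h : ℝ → ENNReal, Measurable h → ∫⁻ x, W x * h (T x) = ∫⁻ t in Set.Ioi 0, h t)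
    (g : ℝ → ENNReal) (hg : Measurable g) (n : ℕ) : ∀ k : Fin (n+1),
    ∫⁻ x : Fin (n+1) → ℝ, chainP T W n x *
        (g (T (x k)) * ENNReal.ofReal (exp (- T (x (Fin.last _)))))
      = ∫⁻ t in Set.Ioi 0, g t * ENNReal.ofReal (exp (-t)) *
          ENNReal.ofReal (t^(k:ℕ) / (k:ℕ).factorial) := by
  induction n with
  | zero =>
    intro k
    obtain rfl : k = Fin.last 0 := Subsingleton.elim (α := Fin 1) _ _
    exact chain_last hT hW hT0 hcv 0 (fun t => g t * ENNReal.ofReal (exp (-t))) (by fun_prop)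
  | succ n ih =>
    intro k
    induction k using Fin.lastCases with
    | last => exact chain_last hT hW hT0 hcv (n+1) (fun t => g t * ENNReal.ofReal (exp (-t))) (by fun_prop)
    | cast k =>
      have := chain_step hT hW hT0 hcv n (fun x => g (T (x k)))
        (hg.comp (hT.comp (measurable_pi_apply _))) (fun t => ENNReal.ofReal (exp (-t))) (by fun_prop)
      simp only at this
      rw [this]
      have he : ∀ c : ℝ, ∫⁻ t in Set.Ioi c, ENNReal.ofReal (exp (-t)) = ENNReal.ofReal (exp (-c)) := by
        intro c
        rw [← ofReal_integral_eq_lintegral_ofReal, integral_exp_neg_Ioi]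
        · exact integrableOn_exp_neg_Ioi c
        · exact ae_of_all _ fun t => (exp_pos _).le
      simp only [he]
      exact ih k

lemma gamma_second {x : ℝ} (hx : 0 < x) :
    IntegrableOn (fun t : ℝ => t ^ (x-1) * (log t ^ 2 * exp (-t))) (Set.Ioi 0) ∧
    iteratedDeriv 2 Real.Gamma x = ∫ t in Set.Ioi 0, t ^ (x-1) * (log t ^ 2 * exp (-t)) := by
  set f : ℝ → ℂ := fun t => ((exp (-t) : ℝ) : ℂ) with hf
  set f1 : ℝ → ℂ := fun t => log t • f t with hf1
  set f2 : ℝ → ℂ := fun t => log t • f1 t with hf2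
  have ftop : ∀ a : ℝ, f =O[atTop] (· ^ (-a)) := by
    intro a
    refine Asymptotics.IsBigO.of_norm_left ?_
    simp_rw [hf, Complex.norm_real, norm_of_nonneg (exp_pos _).le]
    simpa only [neg_one_mul] using (isLittleO_exp_neg_mul_rpow_atTop zero_lt_one _).isBigO
  have fbot : f =O[𝓝[>] 0] (· ^ (-(0:ℝ))) := by
    simp_rw [neg_zero, rpow_zero]
    refine (Continuous.continuousAt (x := (0:ℝ)) ?_).continuousWithinAt.isBigO_one ℝ |>.mono le_rfl
    exact Complex.continuous_ofReal.comp (by fun_prop)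
  have floc : LocallyIntegrableOn f (Set.Ioi 0) :=
    (Continuous.locallyIntegrable (Complex.continuous_ofReal.comp (by fun_prop))).locallyIntegrableOn _
  have f1loc : LocallyIntegrableOn f1 (Set.Ioi 0) := by
    refine ContinuousOn.locallyIntegrableOn ?_ measurableSet_Ioi
    refine ContinuousOn.smul (continuousOn_log.mono fun t ht => ?_) ?_
    · exact (ne_of_gt ht : t ≠ 0)
    · exact (Complex.continuous_ofReal.comp (by fun_prop)).continuousOn
  have d1 : ∀ y : ℝ, 0 < y → HasDerivAt Real.Gamma (mellin f1 y).re y := by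
    intro y hy
    have h1 : HasDerivAt (mellin f) (mellin f1 y) y :=
      (mellin_hasDerivAt_of_isBigO_rpow (s := (y:ℂ)) floc (ftop (y+1)) (by simp) fbot (by simpa)).2
    have h2 : HasDerivAt Complex.Gamma (mellin f1 y) y := by
      refine h1.congr_of_eventuallyEq ?_
      have : IsOpen {s : ℂ | 0 < s.re} := isOpen_lt continuous_const Complex.continuous_re
      filter_upwards [this.mem_nhds (by simpa using hy)] with s hs
      rw [Complex.Gamma_eq_integral hs, Complex.GammaIntegral_eq_mellin]
    exact h2.real_of_complex
  have h2 := mellin_hasDerivAt_of_isBigO_rpow (s := (x:ℂ)) (a := x + 1) (b := x / 2) f1loc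
    (isBigO_rpow_top_log_smul (by linarith : x + 1 < x + 2) (ftop (x+2))) (by simp)
    (isBigO_rpow_zero_log_smul (by linarith) fbot) (by simp; linarith)
  have d2 : HasDerivAt (deriv Real.Gamma) (mellin f2 x).re x := by
    refine h2.2.real_of_complex.congr_of_eventuallyEq ?_
    filter_upwards [lt_mem_nhds hx] with y hy using (d1 y hy).deriv
  have heq : ∀ t ∈ Set.Ioi (0:ℝ), (t:ℂ) ^ ((x:ℂ) - 1) • f2 t =
      ((t ^ (x-1) * (log t ^ 2 * exp (-t)) : ℝ) : ℂ) := by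
    intro t ht
    have : ((t:ℂ) ^ ((x:ℂ) - 1)) = ((t ^ (x-1) : ℝ) : ℂ) := by
      rw [Complex.ofReal_cpow (le_of_lt ht)]; simp
    rw [this]
    simp only [hf2, hf1, hf, smul_eq_mul, Complex.real_smul]
    push_cast
    ring
  refine ⟨?_, ?_⟩
  · have := h2.1
    unfold MellinConvergent at this
    have := (integrableOn_congr_fun heq measurableSet_Ioi).1 this
    exact Integrable.re this
  · rw [iteratedDeriv_succ, iteratedDeriv_one, d2.deriv, mellin, setIntegral_congr_fun measurableSet_Ioi heq]
    rw [integral_complex_ofReal, Complex.ofReal_re]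

noncomputable def gT (μ σ ξ x : ℝ) : ℝ :=
  if 0 < 1 + ξ * ((x - μ) / σ) then (1 + ξ * ((x - μ) / σ)) ^ (-1 / ξ) else 0

noncomputable def gW (μ σ ξ x : ℝ) : ENNReal :=
  if 0 < 1 + ξ * ((x - μ) / σ) then
    ENNReal.ofReal (σ⁻¹ * exp (- ((1 / ξ + 1) * log (1 + ξ * ((x - μ) / σ))))) else 0

lemma gT_meas (μ σ ξ : ℝ) : Measurable (gT μ σ ξ) :=
  Measurable.ite (measurableSet_lt (by fun_prop) (by fun_prop)) (by fun_prop) (by fun_prop)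

lemma gW_meas (μ σ ξ : ℝ) : Measurable (gW μ σ ξ) :=
  Measurable.ite (measurableSet_lt (by fun_prop) (by fun_prop)) (by fun_prop) (by fun_prop)

lemma gT_nonneg (μ σ ξ x : ℝ) : 0 ≤ gT μ σ ξ x := by
  unfold gT; split_ifs with h
  · positivity
  · rfl

lemma gT_lt {μ σ ξ : ℝ} (hσ : 0 < σ) (hξ : ξ ≠ 0) {x y : ℝ}
    (hx : 0 < 1 + ξ * ((x - μ) / σ)) (hy : 0 < 1 + ξ * ((y - μ) / σ)) :
    gT μ σ ξ x < gT μ σ ξ y ↔ y < x := by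
  have aux : (x - μ) / σ < (y - μ) / σ ↔ x < y := by
    rw [div_lt_div_iff_of_pos_right hσ]; simp
  have aux' : (y - μ) / σ < (x - μ) / σ ↔ y < x := by
    rw [div_lt_div_iff_of_pos_right hσ]; simp
  simp only [gT, hx, hy, if_true]
  rcases lt_or_gt_of_ne hξ with h | h
  · rw [rpow_lt_rpow_iff hx.le hy.le (div_pos_of_neg_of_neg (by norm_num) h), add_lt_add_iff_left,
      mul_lt_mul_left_of_neg h, aux']
  · rw [rpow_lt_rpow_iff_of_neg hx hy (div_neg_of_neg_of_pos (by norm_num) h), add_lt_add_iff_left,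
      mul_lt_mul_iff_right₀ h, aux']

lemma gT_cv {μ σ ξ : ℝ} (hσ : 0 < σ) (hξ : ξ ≠ 0) (h : ℝ → ENNReal) :
    ∫⁻ x, gW μ σ ξ x * h (gT μ σ ξ x) = ∫⁻ t in Set.Ioi 0, h t := by
  set S : Set ℝ := {x | 0 < 1 + ξ * ((x - μ) / σ)} with hS
  have hSo : IsOpen S := isOpen_lt continuous_const (by fun_prop)
  have himg : gT μ σ ξ '' S = Set.Ioi 0 := by
    ext t
    constructor
    · rintro ⟨x, hx, rfl⟩
      have hx' : 0 < 1 + ξ * ((x - μ) / σ) := hx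
      simp only [gT, hx', if_true]
      exact rpow_pos_of_pos hx' _
    · intro ht
      have ht : 0 < t := ht
      have hu : 1 + ξ * ((μ + σ * ((t ^ (-ξ) - 1) / ξ) - μ) / σ) = t ^ (-ξ) := by
        field_simp; ring
      have hp : 0 < t ^ (-ξ) := rpow_pos_of_pos ht _
      refine ⟨μ + σ * ((t ^ (-ξ) - 1) / ξ), ?_, ?_⟩
      · rw [hS, Set.mem_ofPred_eq, hu]; exact hp
      · simp only [gT, hu, hp, if_true]
        rw [← rpow_mul ht.le]
        have : -ξ * (-1/ξ) = 1 := by field_simp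
        rw [this, rpow_one]
  have hinj : Set.InjOn (gT μ σ ξ) S := by
    intro x hx y hy hxy
    by_contra hne
    rcases lt_or_gt_of_ne hne with h1 | h1
    · exact absurd ((gT_lt hσ hξ hy hx).2 h1) (by rw [hxy]; exact lt_irrefl _)
    · exact absurd ((gT_lt hσ hξ hx hy).2 h1) (by rw [hxy]; exact lt_irrefl _)
  have hder : ∀ x ∈ S, HasDerivWithinAt (gT μ σ ξ)
      (ξ / σ * (-1/ξ) * (1 + ξ * ((x - μ) / σ)) ^ (-1/ξ - 1)) S x := by
    intro x hx
    have hx' : 0 < 1 + ξ * ((x - μ) / σ) := hx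
    have h1 : HasDerivAt (fun x => 1 + ξ * ((x - μ) / σ)) (ξ / σ) x := by
      have := ((((hasDerivAt_id x).sub_const μ).div_const σ).const_mul ξ).const_add 1
      rw [div_eq_mul_one_div ξ σ]
      exact this
    have h2 := h1.rpow_const (p := -1/ξ) (Or.inl hx'.ne')
    refine (h2.congr_of_eventuallyEq ?_).hasDerivWithinAt
    filter_upwards [hSo.mem_nhds hx] with y hy
    have hy' : 0 < 1 + ξ * ((y - μ) / σ) := hy
    simp [gT, hy']
  rw [← himg, lintegral_image_eq_lintegral_abs_deriv_mul hSo.measurableSet hder hinj,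
    ← lintegral_indicator hSo.measurableSet]
  congr 1; ext x
  by_cases hx : 0 < 1 + ξ * ((x - μ) / σ)
  · rw [Set.indicator_of_mem (by exact hx)]
    simp only [gW, hx, if_true]
    congr 2
    rw [rpow_def_of_pos hx, abs_mul, abs_of_pos (exp_pos _)]
    congr 1
    · have : ξ / σ * (-1 / ξ) = - σ⁻¹ := by field_simp
      rw [this, abs_neg, abs_of_pos (inv_pos.2 hσ)]
    · congr 1; ring
  · rw [Set.indicator_of_notMem (by exact hx)]
    simp [gW, hx]

lemma density_eq {μ σ ξ : ℝ} (hσ : 0 < σ) (hξ : ξ ≠ 0) (n : ℕ) (x : Fin (n+1) → ℝ) :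
    ENNReal.ofReal (gevrDensity μ σ ξ (n+1) x) =
      chainP (gT μ σ ξ) (gW μ σ ξ) n x *
        ENNReal.ofReal (exp (- gT μ σ ξ (x (Fin.last n)))) := by
  unfold gevrDensity chainP
  by_cases hpos : ∀ j, 0 < 1 + ξ * ((x j - μ) / σ)
  · have hW : ∏ i, gW μ σ ξ (x i) = ENNReal.ofReal ((σ ^ (n+1))⁻¹ *
        exp (-((1 / ξ + 1) * ∑ j, log (1 + ξ * ((x j - μ) / σ))))) := by
      simp only [gW, hpos, if_true]
      rw [← ENNReal.ofReal_prod_of_nonneg (fun i _ => by positivity), Finset.prod_mul_distrib,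
        ← exp_sum, Finset.prod_const, Finset.sum_neg_distrib, ← Finset.mul_sum]
      simp
    by_cases hanti : StrictAnti x
    · rw [dif_pos ⟨Nat.succ_pos n, hanti, hpos⟩, hW, Finset.prod_eq_one, mul_one,
        ← ENNReal.ofReal_mul (by positivity), mul_assoc, ← exp_add]
      · have e : gT μ σ ξ (x (Fin.last n)) = (1 + ξ * ((x (Fin.last n) - μ) / σ)) ^ (-1 / ξ) := by
          simp only [gT, hpos, if_true]
        rw [e]
        congr 3
        rw [sub_eq_add_neg, add_comm]
        rfl
      · intro i _
        rw [if_pos]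
        exact (gT_lt hσ hξ (hpos _) (hpos _)).2 (hanti (Fin.castSucc_lt_succ))
    · rw [dif_neg (fun h => hanti h.2.1)]
      have : ∃ i : Fin n, ¬ (x i.succ < x i.castSucc) := by
        by_contra! hc
        exact hanti (Fin.strictAnti_iff_succ_lt.2 hc)
      obtain ⟨i, hi⟩ := this
      rw [Finset.prod_eq_zero (Finset.mem_univ i)
        (if_neg (fun h => hi ((gT_lt hσ hξ (hpos _) (hpos _)).1 h)))]
      simp
  · rw [dif_neg (fun h => hpos h.2.2)]
    push Not at hpos
    obtain ⟨j, hj⟩ := hpos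
    rw [Finset.prod_eq_zero (Finset.mem_univ j) (if_neg (not_lt.2 hj))]
    simp

lemma chainP_zero {μ σ ξ : ℝ} (n : ℕ) (x : Fin (n+1) → ℝ) (k : Fin (n+1))
    (hj : ¬ 0 < 1 + ξ * ((x k - μ) / σ)) : chainP (gT μ σ ξ) (gW μ σ ξ) n x = 0 := by
  unfold chainP
  rw [Finset.prod_eq_zero (Finset.mem_univ k) (if_neg hj)]
  simp

lemma gevr_lintegral {μ σ ξ : ℝ} (hσ : 0 < σ) (hξ : ξ ≠ 0) (n : ℕ) (k : Fin (n+1)) :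
    ∫⁻ x, ENNReal.ofReal ((log (1 + ξ * ((x k - μ) / σ))) ^ 2) ∂(gevrMeasure μ σ ξ (n+1)) =
      ENNReal.ofReal (ξ ^ 2 * iteratedDeriv 2 Real.Gamma ((k : ℕ) + 1 : ℝ) /
        Real.Gamma ((k : ℕ) + 1 : ℝ)) := by
  have hdm : Measurable fun x => ENNReal.ofReal (gevrDensity μ σ ξ (n+1) x) := by
    simp_rw [density_eq hσ hξ]
    exact (measurable_chainP (gT_meas _ _ _) (gW_meas _ _ _) n).mul
      ((((gT_meas μ σ ξ).comp (measurable_pi_apply _)).neg.exp).ennreal_ofReal)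
  unfold gevrMeasure
  rw [lintegral_withDensity_eq_lintegral_mul _ hdm (by fun_prop)]
  have h1 : ∀ x : Fin (n+1) → ℝ, ((fun x => ENNReal.ofReal (gevrDensity μ σ ξ (n+1) x)) *
      fun x : Fin (n+1) → ℝ => ENNReal.ofReal ((log (1 + ξ * ((x k - μ) / σ))) ^ 2)) x =
      chainP (gT μ σ ξ) (gW μ σ ξ) n x * ((fun t => ENNReal.ofReal ((ξ * log t) ^ 2)) (gT μ σ ξ (x k)) *
        ENNReal.ofReal (exp (- gT μ σ ξ (x (Fin.last n))))) := by
    intro x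
    simp only [Pi.mul_apply, density_eq hσ hξ]
    by_cases hk : 0 < 1 + ξ * ((x k - μ) / σ)
    · have : (ξ * log (gT μ σ ξ (x k))) ^ 2 = (log (1 + ξ * ((x k - μ) / σ))) ^ 2 := by
        simp only [gT, hk, if_true]
        rw [log_rpow hk]
        field_simp
      rw [this]; ring
    · rw [chainP_zero n x k hk]; simp
  simp only [h1]
  rw [chain_marg (gT_meas _ _ _) (gW_meas _ _ _) (gT_nonneg _ _ _) (fun h _ => gT_cv hσ hξ h)
    (fun t => ENNReal.ofReal ((ξ * log t) ^ 2)) (by fun_prop) n k]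
  have hk : (0:ℝ) < (k:ℕ) + 1 := by positivity
  obtain ⟨hi, he⟩ := gamma_second hk
  rw [he, Real.Gamma_nat_eq_factorial, ← integral_const_mul, ← integral_div,
    ofReal_integral_eq_lintegral_ofReal ((hi.const_mul _).div_const _)]
  · refine setLIntegral_congr_fun measurableSet_Ioi fun t ht => ?_
    have ht : 0 < t := ht
    rw [← ENNReal.ofReal_mul (by positivity), ← ENNReal.ofReal_mul (by positivity)]
    congr 1
    rw [add_sub_cancel_right, rpow_natCast]
    ring
  · refine (ae_restrict_iff' measurableSet_Ioi).2 (ae_of_all _ fun t ht => ?_)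
    have ht : 0 < t := ht
    simp only [Pi.zero_apply]
    positivity

lemma gamma_second_nonneg {x : ℝ} (hx : 0 < x) : 0 ≤ iteratedDeriv 2 Real.Gamma x := by
  rw [(gamma_second hx).2]
  refine setIntegral_nonneg measurableSet_Ioi fun t ht => ?_
  have ht : 0 < t := ht
  positivity

/-- under the GEV_r distribution,
`E[(log(1+ξZ_j))²] = ξ² Γ″(j)/Γ(j)` for every `1 ≤ j ≤ r`; in particular the
expectation is finite. -/
theorem gevr_second_moment_log_transform
    (μ σ ξ : ℝ) (hσ : 0 < σ) (hξ : ξ ≠ 0) (r : ℕ) (hr : 1 ≤ r)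
    (j : ℕ) (hj1 : 1 ≤ j) (hjr : j ≤ r) :
    MeasureTheory.Integrable
      (fun x : Fin r → ℝ =>
        (Real.log (1 + ξ * ((x ⟨j - 1, by omega⟩ - μ) / σ))) ^ 2)
      (gevrMeasure μ σ ξ r) ∧
    ∫ x : Fin r → ℝ,
        (Real.log (1 + ξ * ((x ⟨j - 1, by omega⟩ - μ) / σ))) ^ 2
        ∂(gevrMeasure μ σ ξ r)
      = ξ ^ 2 * iteratedDeriv 2 Real.Gamma j / Real.Gamma j := by
  obtain ⟨n, rfl⟩ : ∃ n, r = n + 1 := ⟨r - 1, by omega⟩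
  obtain ⟨k, rfl⟩ : ∃ k, j = k + 1 := ⟨j - 1, by omega⟩
  have hk : (0:ℝ) < (k:ℝ) + 1 := by positivity
  have key := gevr_lintegral (μ := μ) hσ hξ n ⟨k + 1 - 1, by omega⟩
  simp only [Nat.add_sub_cancel] at key ⊢
  push_cast
  have hm : Measurable fun x : Fin (n + 1) → ℝ =>
      (Real.log (1 + ξ * ((x ⟨k, by omega⟩ - μ) / σ))) ^ 2 := by fun_prop
  constructor
  · refine ⟨hm.aestronglyMeasurable, ?_⟩
    rw [hasFiniteIntegral_iff_ofReal (ae_of_all _ fun x => sq_nonneg _), key]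
    exact ENNReal.ofReal_lt_top
  · rw [integral_eq_lintegral_of_nonneg_ae (ae_of_all _ fun x => sq_nonneg _)
      hm.aestronglyMeasurable, key, ENNReal.toReal_ofReal]
    have h1 := gamma_second_nonneg hk
    have h2 := Real.Gamma_pos_of_pos hk
    positivity
end

section
/- Fix μ ∈ ℝ, σ > 0, ξ with ξ > −1/2 and ξ ≠ 0, and integer r ≥ 1, and let l^{(r)}(x | μ,σ,ξ) = −r log σ − (1+ξ z_r)^{−1/ξ} − (1/ξ + 1) Σ_{j=1}^r log(1+ξ z_j) be the GEV_r log-likelihood of a single observation x ∈ D_r, with z_j = (x_j − μ)/σ. Then the score has expectation zero under the GEV_r distribution: E[∂l^{(r)}/∂μ (X | μ,σ,ξ)] = 0, E[∂l^{(r)}/∂σ (X | μ,σ,ξ)] = 0, and E[∂l^{(r)}/∂ξ (X | μ,σ,ξ)] = 0, where X = (X_1,…,X_r) has density f_r(· | μ,σ,ξ). -/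
open MeasureTheory ProbabilityTheory Real Filter Topology

/-- The GEV_r log-likelihood contribution of a single block `x`:
`l^{(r)}(x | μ,σ,ξ) = −r log σ − (1+ξz_r)^{−1/ξ} − (1/ξ+1) Σ_j log(1+ξz_j)`. -/
noncomputable def gevrLogLik (r : ℕ) (x : Fin r → ℝ) (μ σ ξ : ℝ) : ℝ :=
  if h : 0 < r then
    -(r : ℝ) * Real.log σ
      - (1 + ξ * ((x ⟨r - 1, Nat.sub_lt h Nat.one_pos⟩ - μ) / σ)) ^ (-1 / ξ)
      - (1 / ξ + 1) * ∑ j, Real.log (1 + ξ * ((x j - μ) / σ))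
  else 0


open Set

structure GoodPair (h h' : ℝ → ℝ) : Prop where
  meas : Measurable h
  meas' : Measurable h'
  der : ∀ t, 0 < t → HasDerivAt h (h' t) t
  at0 : h 0 = 0
  zero : Tendsto h (𝓝[>] 0) (𝓝 0)
  int : ∀ c, 0 < c → IntegrableOn (fun t => h t * Real.exp (-c * t)) (Ioi 0)
  int' : ∀ c, 0 < c → IntegrableOn (fun t => h' t * Real.exp (-c * t)) (Ioi 0)
  top : Tendsto (fun t => h t * Real.exp (-t)) atTop (𝓝 0)

lemma GoodPair.add {h h' k k' : ℝ → ℝ} (H : GoodPair h h') (K : GoodPair k k') :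
    GoodPair (fun t => h t + k t) (fun t => h' t + k' t) where
  meas := H.meas.add K.meas
  meas' := H.meas'.add K.meas'
  der t ht := (H.der t ht).add (K.der t ht)
  at0 := by simp [H.at0, K.at0]
  zero := by simpa using H.zero.add K.zero
  int c hc := by
    simp only [add_mul]
    exact (H.int c hc).add (K.int c hc)
  int' c hc := by
    simp only [add_mul]
    exact (H.int' c hc).add (K.int' c hc)
  top := by simpa only [add_mul, add_zero] using H.top.add K.top

lemma GoodPair.const_mul {h h' : ℝ → ℝ} (H : GoodPair h h') (a : ℝ) :
    GoodPair (fun t => a * h t) (fun t => a * h' t) where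
  meas := H.meas.const_mul a
  meas' := H.meas'.const_mul a
  der t ht := (H.der t ht).const_mul a
  at0 := by simp [H.at0]
  zero := by simpa using H.zero.const_mul a
  int c hc := by
    simp only [mul_assoc]
    exact Integrable.const_mul (H.int c hc) a
  int' c hc := by
    simp only [mul_assoc]
    exact Integrable.const_mul (H.int' c hc) a
  top := by simpa only [mul_assoc, mul_zero] using H.top.const_mul a

lemma int_rpow_exp (s c : ℝ) (hs : -1 < s) (hc : 0 < c) :
    IntegrableOn (fun t : ℝ => t ^ s * Real.exp (-c * t)) (Ioi 0) := by
  simpa using integrableOn_rpow_mul_exp_neg_mul_rpow (p := 1) hs one_pos hc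

lemma goodPair_rpow (a : ℝ) (ha : 0 < a) :
    GoodPair (fun t => t ^ a) (fun t => a * t ^ (a - 1)) where
  meas := by fun_prop
  meas' := by fun_prop
  der t ht := Real.hasDerivAt_rpow_const (Or.inl ht.ne')
  at0 := Real.zero_rpow ha.ne'
  zero := by
    have := (Real.continuousAt_rpow_const 0 a (Or.inr ha.le)).tendsto
    rw [Real.zero_rpow ha.ne'] at this
    exact this.mono_left nhdsWithin_le_nhds
  int c hc := int_rpow_exp a c (by linarith) hc
  int' c hc := by
    simp only [mul_assoc]
    exact Integrable.const_mul (int_rpow_exp (a - 1) c (by linarith) hc) a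
  top := by simpa using tendsto_rpow_mul_exp_neg_mul_atTop_nhds_zero a 1 one_pos

lemma abs_log_le (t : ℝ) (ht : 0 < t) : |Real.log t| ≤ t + 2 * t ^ (-(1 / 2) : ℝ) := by
  have h1 := Real.log_le_sub_one_of_pos ht
  have hp : 0 < t ^ (-(1 / 2) : ℝ) := Real.rpow_pos_of_pos ht _
  have h2 := Real.log_le_sub_one_of_pos hp
  rw [Real.log_rpow ht] at h2
  rw [abs_le]; constructor <;> linarith

lemma goodPair_mul_log :
    GoodPair (fun t => t * Real.log t) (fun t => Real.log t + 1) where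
  meas := by fun_prop
  meas' := by fun_prop
  der t ht := Real.hasDerivAt_mul_log ht.ne'
  at0 := by simp
  zero := by
    have := Real.continuous_mul_log.tendsto 0
    simp only [zero_mul] at this
    exact this.mono_left nhdsWithin_le_nhds
  int c hc := by
    refine Integrable.mono' (g := fun t => t ^ (2:ℝ) * Real.exp (-c * t)
      + 2 * (t ^ (1/2:ℝ) * Real.exp (-c * t)))
      ((int_rpow_exp 2 c (by norm_num) hc).add
      ((int_rpow_exp (1/2) c (by norm_num) hc).const_mul 2))
      (by fun_prop) ?_
    filter_upwards [ae_restrict_mem measurableSet_Ioi] with t ht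
    have ht : 0 < t := ht
    have e1 : t ^ (2:ℝ) = t * t := by rw [Real.rpow_two]; ring
    have e2 : t ^ (1/2:ℝ) = t * t ^ (-(1/2):ℝ) := by
      rw [← Real.rpow_one_add' ht.le (by norm_num)]; norm_num
    rw [Real.norm_eq_abs, abs_mul, abs_mul, abs_of_pos ht, Real.abs_exp, e1, e2]
    have := mul_le_mul_of_nonneg_right (mul_le_mul_of_nonneg_left (abs_log_le t ht) ht.le)
      (Real.exp_pos (-c * t)).le
    linarith
  int' c hc := by
    refine Integrable.mono' (g := fun t => t ^ (1:ℝ) * Real.exp (-c * t)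
      + 2 * (t ^ (-(1/2):ℝ) * Real.exp (-c * t)) + t ^ (0:ℝ) * Real.exp (-c * t))
      (((int_rpow_exp 1 c (by norm_num) hc).add
      ((int_rpow_exp (-(1/2)) c (by norm_num) hc).const_mul 2)).add
      (int_rpow_exp 0 c (by norm_num) hc))
      (by fun_prop) ?_
    filter_upwards [ae_restrict_mem measurableSet_Ioi] with t ht
    have ht : 0 < t := ht
    rw [Real.norm_eq_abs, abs_mul, Real.abs_exp, Real.rpow_one, Real.rpow_zero]
    have h3 : |Real.log t + 1| ≤ t + 2 * t ^ (-(1 / 2) : ℝ) + 1 :=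
      (abs_add_le _ _).trans (by simpa using abs_log_le t ht)
    have := mul_le_mul_of_nonneg_right h3 (Real.exp_pos (-c * t)).le
    linarith
  top := by
    have h2 := tendsto_rpow_mul_exp_neg_mul_atTop_nhds_zero 2 1 one_pos
    refine squeeze_zero' ?_ ?_ h2
    · filter_upwards [eventually_ge_atTop 1] with t ht
      have := Real.log_nonneg ht
      positivity
    · filter_upwards [eventually_ge_atTop 1] with t ht
      have := Real.log_le_sub_one_of_pos (by linarith : 0 < t)
      rw [Real.rpow_two, neg_one_mul]
      have : t * Real.log t ≤ t ^ 2 := by nlinarith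
      gcongr

/-- one-coordinate kernel -/
noncomputable def scoreKer (h h' : ℝ → ℝ) (t m : ℝ) : ℝ :=
  (h' t - if t = m then h t else 0) * Real.exp (-m)

lemma scoreKer_line_integral {h h' : ℝ → ℝ} (H : GoodPair h h') (M : ℝ) (hM : 0 ≤ M) :
    ∫ t in Ioi 0, scoreKer h h' t (max t M) = 0 := by
  have i1 : IntegrableOn (fun t => h' t * Real.exp (-t)) (Ioi 0) := by
    simpa using H.int' 1 one_pos
  have i0 : IntegrableOn (fun t => h t * Real.exp (-t)) (Ioi 0) := by
    simpa using H.int 1 one_pos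
  have iM : IntegrableOn (fun t => h' t * Real.exp (-t) - h t * Real.exp (-t)) (Ioi M) :=
    (i1.sub i0).mono_set (Ioi_subset_Ioi hM)
  have e2 : EqOn (fun t => scoreKer h h' t (max t M))
      (fun t => h' t * Real.exp (-t) - h t * Real.exp (-t)) (Ioi M) := by
    intro t ht
    have : max t M = t := max_eq_left (le_of_lt ht)
    simp only [scoreKer, this, if_true]; ring
  have dd : ∀ t, 0 < t → HasDerivAt (fun t => h t * Real.exp (-t))
      (h' t * Real.exp (-t) - h t * Real.exp (-t)) t := by
    intro t ht
    have := (H.der t ht).mul ((hasDerivAt_neg t).exp)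
    refine this.congr_deriv ?_
    ring
  rcases hM.eq_or_lt with rfl | hM
  · rw [setIntegral_congr_fun measurableSet_Ioi e2]
    have lim0 : Tendsto (fun t => h t * Real.exp (-t)) (𝓝[>] 0) (𝓝 0) := by
      have : Tendsto (fun t : ℝ => Real.exp (-t)) (𝓝[>] 0) (𝓝 (Real.exp (-0))) :=
        (Continuous.tendsto (by fun_prop) 0).mono_left nhdsWithin_le_nhds
      simpa using H.zero.mul this
    have hcw : ContinuousWithinAt (fun t => h t * Real.exp (-t)) (Ici 0) 0 := by
      rw [← continuousWithinAt_Ioi_iff_Ici]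
      unfold ContinuousWithinAt
      simpa [H.at0] using lim0
    simpa [H.at0] using integral_Ioi_of_hasDerivAt_of_tendsto hcw dd iM H.top
  · have ih : IntegrableOn h' (Ioc 0 M) := by
      have := (i1.mono_set (Ioc_subset_Ioi_self : Ioc 0 M ⊆ Ioi 0))
      refine (Integrable.const_mul this.norm (Real.exp M)).mono' H.meas'.aestronglyMeasurable ?_
      filter_upwards [ae_restrict_mem measurableSet_Ioc] with t ht
      have hb : 1 ≤ Real.exp M * Real.exp (-t) := by
        rw [← Real.exp_add]; exact Real.one_le_exp (by linarith [ht.2])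
      have := mul_le_mul_of_nonneg_left hb (norm_nonneg (h' t))
      rw [norm_mul, Real.norm_eq_abs (Real.exp _), Real.abs_exp]
      linarith
    have e1 : EqOn (fun t => scoreKer h h' t (max t M))
      (fun t => h' t * Real.exp (-M)) (Ioo 0 M) := by
      intro t ht
      have : max t M = M := max_eq_right ht.2.le
      simp only [scoreKer, this, if_neg ht.2.ne]; ring
    have e1' : (fun t => scoreKer h h' t (max t M)) =ᵐ[volume.restrict (Ioc 0 M)]
        (fun t => h' t * Real.exp (-M)) := by
      rw [← restrict_Ioo_eq_restrict_Ioc]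
      exact (ae_restrict_mem measurableSet_Ioo).mono e1
    have A : ∫ t in Ioc 0 M, h' t = h M := by
      have := intervalIntegral.integral_eq_sub_of_hasDerivAt_of_tendsto hM
        (fun x hx => H.der x hx.1) ((intervalIntegrable_iff_integrableOn_Ioc_of_le hM.le).2 ih)
        H.zero ((H.der M hM).continuousAt.tendsto.mono_left nhdsWithin_le_nhds)
      rw [intervalIntegral.integral_of_le hM.le] at this
      simpa using this
    have B := integral_Ioi_of_hasDerivAt_of_tendsto' (a := M)
      (fun x hx => dd x (hM.trans_le hx)) iM H.top
    rw [← Ioc_union_Ioi_eq_Ioi hM.le, setIntegral_union (Ioc_disjoint_Ioi le_rfl)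
      measurableSet_Ioi, integral_congr_ae e1', setIntegral_congr_fun measurableSet_Ioi e2, B,
      integral_mul_const, A]
    · ring
    · exact (Integrable.congr (ih.mul_const _) e1'.symm)
    · exact iM.congr_fun e2.symm measurableSet_Ioi

noncomputable abbrev posVol : Measure ℝ := volume.restrict (Ioi 0)

lemma ae_pos_pi (n : ℕ) : ∀ᵐ u ∂(Measure.pi fun _ : Fin n => posVol), ∀ i, 0 < u i := by
  rw [ae_all_iff]; intro i
  exact (Measure.quasiMeasurePreserving_eval (fun _ : Fin n => posVol) i).ae
    (ae_restrict_mem measurableSet_Ioi)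

lemma scoreKer_measurable {h h' : ℝ → ℝ} (H : GoodPair h h') (n : ℕ) (j : Fin n) :
    Measurable (fun u : Fin n → ℝ => scoreKer h h' (u j) ‖u‖) := by
  unfold scoreKer
  have m1 := H.meas.comp (measurable_pi_apply (X := fun _ : Fin n => ℝ) j)
  have m2 := H.meas'.comp (measurable_pi_apply (X := fun _ : Fin n => ℝ) j)
  refine (m2.sub (Measurable.ite (measurableSet_eq_fun (by fun_prop) (by fun_prop)) m1
    measurable_const)).mul (by fun_prop)

lemma scoreKer_integrable {h h' : ℝ → ℝ} (H : GoodPair h h') (n : ℕ) (j : Fin n) :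
    Integrable (fun u : Fin n → ℝ => scoreKer h h' (u j) ‖u‖)
      (Measure.pi fun _ : Fin n => posVol) := by
  have hn : (0:ℝ) < n := by exact_mod_cast j.pos
  set c : ℝ := (n:ℝ)⁻¹ with hc
  have hc0 : 0 < c := by positivity
  let k : Fin n → ℝ → ℝ := fun i t =>
    (if i = j then |h' t| + |h t| else 1) * Real.exp (-c * t)
  have hk : ∀ i, Integrable (k i) posVol := by
    intro i
    by_cases hij : i = j
    · have := (H.int' c hc0).abs.add (H.int c hc0).abs
      refine Integrable.congr this (Eventually.of_forall fun t => ?_)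
      simp [k, hij, abs_mul, add_mul]
    · have := int_rpow_exp 0 c (by norm_num) hc0
      simpa [k, hij, IntegrableOn] using this
  refine (Integrable.fintype_prod (μ := fun _ => posVol) hk).mono'
    (scoreKer_measurable H n j).aestronglyMeasurable ?_
  filter_upwards with u
  have e : ∏ i, k i (u i) = (|h' (u j)| + |h (u j)|) * Real.exp (-c * ∑ i, u i) := by
    simp only [k]
    rw [Finset.prod_mul_distrib, ← Real.exp_sum, ← Finset.mul_sum]
    congr 1
    rw [Finset.prod_eq_single j]
    · simp
    · intro b _ hb; simp [hb]
    · simp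
  rw [e, scoreKer, Real.norm_eq_abs, abs_mul, Real.abs_exp]
  have hs : ∑ i, u i ≤ n * ‖u‖ := by
    calc ∑ i, u i ≤ ∑ i : Fin n, ‖u‖ :=
          Finset.sum_le_sum fun i _ => (le_abs_self _).trans (norm_le_pi_norm u i)
      _ = n * ‖u‖ := by simp
  have hcs : c * ∑ i, u i ≤ ‖u‖ := by
    calc c * ∑ i, u i ≤ c * (n * ‖u‖) := by gcongr
      _ = ‖u‖ := by rw [hc]; field_simp
  refine mul_le_mul ?_ (Real.exp_le_exp.2 (by linarith)) (Real.exp_pos _).le (by positivity)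
  refine (abs_sub _ _).trans ?_
  refine add_le_add le_rfl ?_
  split_ifs <;> simp

lemma norm_insertNth (n : ℕ) (j : Fin (n+1)) (t : ℝ) (y : Fin n → ℝ) :
    ‖(j.insertNth t y : Fin (n+1) → ℝ)‖ = max |t| ‖y‖ := by
  apply le_antisymm
  · rw [pi_norm_le_iff_of_nonneg (by positivity), Fin.forall_iff_succAbove j]
    refine ⟨by simp, fun i => ?_⟩
    rw [Fin.insertNth_apply_succAbove]
    exact (norm_le_pi_norm y i).trans (le_max_right _ _)
  · apply max_le
    · simpa using norm_le_pi_norm (j.insertNth t y : Fin (n+1) → ℝ) j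
    · rw [pi_norm_le_iff_of_nonneg (by positivity)]
      intro i
      simpa using norm_le_pi_norm (j.insertNth t y : Fin (n+1) → ℝ) (j.succAbove i)

lemma scoreKer_integral {h h' : ℝ → ℝ} (H : GoodPair h h') (n : ℕ) (j : Fin n) :
    ∫ u : Fin n → ℝ, scoreKer h h' (u j) ‖u‖ ∂(Measure.pi fun _ : Fin n => posVol) = 0 := by
  obtain _ | n := n
  · exact j.elim0
  have mp := (measurePreserving_piFinSuccAbove (fun _ : Fin (n+1) => posVol) j).symm
  have I := scoreKer_integrable H (n+1) j
  rw [← mp.integral_comp']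
  rw [← mp.integrable_comp_emb (MeasurableEquiv.measurableEmbedding _)] at I
  refine (integral_prod_symm _ I).trans ?_
  apply integral_eq_zero_of_ae
  filter_upwards with y
  rw [Pi.zero_apply, ← scoreKer_line_integral H ‖y‖ (norm_nonneg _)]
  refine setIntegral_congr_fun measurableSet_Ioi fun t ht => ?_
  have ht : 0 < t := ht
  have : ((MeasurableEquiv.piFinSuccAbove (fun _ : Fin (n+1) => ℝ) j).symm (t, y)) =
    (j.insertNth t y : Fin (n+1) → ℝ) := rfl
  simp only [Function.comp_apply, this, norm_insertNth, abs_of_pos ht, Fin.insertNth_apply_same]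

def chamber (n : ℕ) : Set (Fin n → ℝ) := {u | StrictMono u ∧ ∀ i, 0 < u i}

lemma measurableSet_chamber (n : ℕ) : MeasurableSet (chamber n) := by
  have : chamber n = (⋂ i, ⋂ j, ⋂ (_ : i < j), {u : Fin n → ℝ | u i < u j}) ∩ ⋂ i, {u | 0 < u i} := by
    ext u
    simp [chamber, StrictMono]
  rw [this]
  refine MeasurableSet.inter ?_ ?_
  · refine MeasurableSet.iInter fun i => MeasurableSet.iInter fun j => MeasurableSet.iInter fun _ => ?_
    exact measurableSet_lt (by fun_prop) (by fun_prop)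
  · exact MeasurableSet.iInter fun i => measurableSet_lt (by fun_prop) (by fun_prop)

lemma null_diag (n : ℕ) (i j : Fin n) (hij : i ≠ j) :
    volume {u : Fin n → ℝ | u i = u j} = 0 := by
  let L : (Fin n → ℝ) →ₗ[ℝ] ℝ := (LinearMap.proj i : (Fin n → ℝ) →ₗ[ℝ] ℝ) - LinearMap.proj j
  have e : {u : Fin n → ℝ | u i = u j} = (LinearMap.ker L : Set (Fin n → ℝ)) := by
    ext u; simp [L, sub_eq_zero]
  rw [e]
  apply Measure.addHaar_submodule
  intro h
  have : Pi.single i 1 ∈ LinearMap.ker L := by rw [h]; trivial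
  simp [L, Pi.single_apply, hij.symm] at this

noncomputable def symScore (h h' : ℝ → ℝ) (n : ℕ) (u : Fin n → ℝ) : ℝ :=
  ∑ j, scoreKer h h' (u j) ‖u‖

lemma norm_comp_perm (n : ℕ) (u : Fin n → ℝ) (τ : Equiv.Perm (Fin n)) : ‖u ∘ τ‖ = ‖u‖ := by
  apply le_antisymm <;> rw [pi_norm_le_iff_of_nonneg (norm_nonneg _)] <;> intro i
  · exact norm_le_pi_norm u (τ i)
  · simpa using norm_le_pi_norm (u ∘ τ) (τ.symm i)

lemma symScore_perm (h h' : ℝ → ℝ) (n : ℕ) (u : Fin n → ℝ) (τ : Equiv.Perm (Fin n)) :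
    symScore h h' n (u ∘ τ) = symScore h h' n u := by
  unfold symScore
  rw [norm_comp_perm]
  exact Equiv.sum_comp τ (fun j => scoreKer h h' (u j) ‖u‖)

lemma chamber_integral {h h' : ℝ → ℝ} (H : GoodPair h h') (n : ℕ) :
    ∫ u in chamber n, symScore h h' n u = 0 := by
  let S : Equiv.Perm (Fin n) → Set (Fin n → ℝ) := fun τ => (fun u => u ∘ τ) ⁻¹' chamber n
  have hP : (Measure.pi fun _ : Fin n => posVol) =
      volume.restrict (univ.pi fun _ : Fin n => Ioi (0:ℝ)) := by
    rw [volume_pi, Measure.restrict_pi_pi]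
  have I : IntegrableOn (symScore h h' n) (univ.pi fun _ : Fin n => Ioi (0:ℝ)) := by
    rw [IntegrableOn, ← hP]
    exact integrable_finsetSum _ fun j _ => scoreKer_integrable H n j
  have Z : ∫ u in (univ.pi fun _ : Fin n => Ioi (0:ℝ)), symScore h h' n u = 0 := by
    rw [← hP]
    unfold symScore
    rw [integral_finsetSum _ fun j _ => scoreKer_integrable H n j]
    exact Finset.sum_eq_zero fun j _ => scoreKer_integral H n j
  have eqS : ∀ τ : Equiv.Perm (Fin n), (fun u : Fin n → ℝ => u ∘ τ) =
      MeasurableEquiv.piCongrLeft (fun _ : Fin n => ℝ) τ.symm := by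
    intro τ
    funext u i
    obtain ⟨j, rfl⟩ := τ.symm.surjective i
    rw [MeasurableEquiv.coe_piCongrLeft, Equiv.piCongrLeft_apply_apply]
    simp
  have mpS : ∀ τ : Equiv.Perm (Fin n), MeasurePreserving (fun u : Fin n → ℝ => u ∘ τ)
      volume volume := by
    intro τ
    rw [eqS]
    exact volume_measurePreserving_piCongrLeft (fun _ : Fin n => ℝ) τ.symm
  have embS : ∀ τ : Equiv.Perm (Fin n), MeasurableEmbedding (fun u : Fin n → ℝ => u ∘ τ) := by
    intro τ
    rw [eqS]
    exact (MeasurableEquiv.piCongrLeft (fun _ : Fin n => ℝ) τ.symm).measurableEmbedding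
  have mS : ∀ τ, MeasurableSet (S τ) := fun τ => (mpS τ).measurable (measurableSet_chamber n)
  have sub : ∀ τ, S τ ⊆ univ.pi fun _ : Fin n => Ioi (0:ℝ) := by
    intro τ u hu i _
    have := hu.2 (τ.symm i)
    simpa using this
  have disj : Pairwise (Function.onFun Disjoint S) := by
    intro τ ρ hne
    rw [Function.onFun, Set.disjoint_left]
    intro u hu hv
    apply hne
    have h1 : StrictMono (u ∘ τ) := hu.1
    have h2 : StrictMono (u ∘ ρ) := hv.1
    have hr : u ∘ τ = u ∘ ρ := by
      rw [← StrictMono.range_inj h1 h2, τ.surjective.range_comp, ρ.surjective.range_comp]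
    have inj : Function.Injective u := by
      have := h1.injective.comp τ.symm.injective
      simpa [Function.comp_assoc] using this
    ext i
    exact congrArg Fin.val (inj (congrFun hr i))
  have cover : (⋃ τ, S τ) =ᵐ[volume] (univ.pi fun _ : Fin n => Ioi (0:ℝ)) := by
    refine Filter.EventuallyLE.antisymm (LE.le.eventuallyLE (iUnion_subset sub)) ?_
    have hinj : ∀ᵐ u : Fin n → ℝ, ∀ i j, i ≠ j → u i ≠ u j := by
      rw [ae_all_iff]; intro i
      rw [ae_all_iff]; intro j
      by_cases hij : i = j
      · simp [hij]
      · have := null_diag n i j hij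
        rw [← compl_compl {u : Fin n → ℝ | u i = u j}] at this
        filter_upwards [mem_ae_iff.2 this] with u hu _ using hu
    filter_upwards [hinj] with u hu hpos
    refine mem_iUnion.2 ⟨Tuple.sort u, ?_, fun i => hpos _ (mem_univ _)⟩
    refine (Tuple.monotone_sort u).strictMono_of_injective ?_
    have : Function.Injective u := by
      intro a b hab
      by_contra hne
      exact hu a b hne hab
    exact this.comp (Tuple.sort u).injective
  have eachS : ∀ τ, ∫ u in S τ, symScore h h' n u = ∫ u in chamber n, symScore h h' n u := by
    intro τ
    rw [← (mpS τ).setIntegral_preimage_emb (embS τ) (symScore h h' n) (chamber n)]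
    simp only [symScore_perm]
    rfl
  have tot := integral_iUnion_fintype (μ := volume) mS disj (fun τ => I.mono_set (sub τ))
  rw [setIntegral_congr_set cover, Z] at tot
  simp only [eachS, Finset.sum_const, nsmul_eq_mul] at tot
  have hc : ((Finset.univ : Finset (Equiv.Perm (Fin n))).card : ℝ) ≠ 0 := by
    simp [Nat.factorial_ne_zero]
  exact (mul_eq_zero.1 tot.symm).resolve_left hc

lemma symScore_chamber (h h' : ℝ → ℝ) (n : ℕ) (hn : 0 < n) (u : Fin n → ℝ) (hu : u ∈ chamber n) :
    symScore h h' n u = ((∑ j, h' (u j)) - h (u ⟨n - 1, Nat.sub_lt hn Nat.one_pos⟩))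
      * Real.exp (-u ⟨n - 1, Nat.sub_lt hn Nat.one_pos⟩) := by
  set l : Fin n := ⟨n - 1, Nat.sub_lt hn Nat.one_pos⟩ with hl
  have hle : ∀ i, i ≤ l := fun i => by
    rw [Fin.le_def]; simp only [hl]; omega
  have hnorm : ‖u‖ = u l := by
    apply le_antisymm
    · rw [pi_norm_le_iff_of_nonneg (hu.2 l).le]
      intro i
      rw [Real.norm_eq_abs, abs_of_pos (hu.2 i)]
      exact hu.1.monotone (hle i)
    · exact (le_abs_self _).trans (norm_le_pi_norm u l)
  simp only [symScore, scoreKer, hnorm, ← Finset.sum_mul, Finset.sum_sub_distrib,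
    hu.1.injective.eq_iff, Finset.sum_ite_eq', Finset.mem_univ, if_true]

section
variable (μ σ ξ : ℝ)

noncomputable def gq (t : ℝ) : ℝ := μ + σ * ((t ^ (-ξ) - 1) / ξ)

lemma gq_w (hσ : 0 < σ) (hξ : ξ ≠ 0) (t : ℝ) : 1 + ξ * ((gq μ σ ξ t - μ) / σ) = t ^ (-ξ) := by
  unfold gq; field_simp; ring

lemma gq_deriv (hξ : ξ ≠ 0) (t : ℝ) (ht : 0 < t) :
    HasDerivAt (gq μ σ ξ) (-σ * t ^ (-ξ - 1)) t := by
  have := ((((Real.hasDerivAt_rpow_const (p := -ξ) (Or.inl ht.ne')).sub_const 1).div_const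
    ξ).const_mul σ).const_add μ
  refine this.congr_deriv ?_
  field_simp

lemma gq_anti (hσ : 0 < σ) (hξ : ξ ≠ 0) : StrictAntiOn (gq μ σ ξ) (Ioi 0) := by
  apply strictAntiOn_of_deriv_neg (convex_Ioi 0)
  · intro t ht
    exact (gq_deriv μ σ ξ hξ t ht).continuousAt.continuousWithinAt
  · intro t ht
    rw [interior_Ioi] at ht
    rw [(gq_deriv μ σ ξ hξ t ht).deriv]
    have := Real.rpow_pos_of_pos ht (-ξ - 1)
    nlinarith [mul_pos hσ this]

lemma gq_inv (hσ : 0 < σ) (hξ : ξ ≠ 0) (x : ℝ) (hx : 0 < 1 + ξ * ((x - μ) / σ)) :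
    gq μ σ ξ ((1 + ξ * ((x - μ) / σ)) ^ (-1 / ξ)) = x := by
  unfold gq
  rw [← Real.rpow_mul hx.le, show -1 / ξ * -ξ = 1 by field_simp, Real.rpow_one]
  field_simp; ring

def gevDom (r : ℕ) : Set (Fin r → ℝ) :=
  {x | StrictAnti x ∧ ∀ j, 0 < 1 + ξ * ((x j - μ) / σ)}

lemma measurableSet_gevDom (n : ℕ) : MeasurableSet (gevDom μ σ ξ n) := by
  have : gevDom μ σ ξ n = (⋂ i, ⋂ j, ⋂ (_ : i < j), {u : Fin n → ℝ | u j < u i}) ∩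
      ⋂ i, {u | 0 < 1 + ξ * ((u i - μ) / σ)} := by
    ext u
    simp [gevDom, StrictAnti]
  rw [this]
  refine MeasurableSet.inter ?_ ?_
  · refine MeasurableSet.iInter fun i => MeasurableSet.iInter fun j => MeasurableSet.iInter fun _ => ?_
    exact measurableSet_lt (by fun_prop) (by fun_prop)
  · exact MeasurableSet.iInter fun i => measurableSet_lt (by fun_prop) (by fun_prop)

lemma gevDom_image (hσ : 0 < σ) (hξ : ξ ≠ 0) (r : ℕ) :
    gevDom μ σ ξ r = (fun u : Fin r → ℝ => fun i => gq μ σ ξ (u i)) '' chamber r := by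
  ext x
  constructor
  · rintro ⟨h1, h2⟩
    have hp : ∀ i, 0 < (1 + ξ * ((x i - μ) / σ)) ^ (-1 / ξ) := fun i => Real.rpow_pos_of_pos (h2 i) _
    refine ⟨fun i => (1 + ξ * ((x i - μ) / σ)) ^ (-1 / ξ), ⟨?_, hp⟩, ?_⟩
    · intro i j hij
      rw [← (gq_anti μ σ ξ hσ hξ).lt_iff_gt (hp j) (hp i), gq_inv μ σ ξ hσ hξ _ (h2 _),
        gq_inv μ σ ξ hσ hξ _ (h2 _)]
      exact h1 hij
    · funext i; exact gq_inv μ σ ξ hσ hξ _ (h2 _)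
  · rintro ⟨u, hu, rfl⟩
    refine ⟨fun i j hij => gq_anti μ σ ξ hσ hξ (hu.2 i) (hu.2 j) (hu.1 hij), fun j => ?_⟩
    simp only [gq_w μ σ ξ hσ hξ]
    exact Real.rpow_pos_of_pos (hu.2 j) _

lemma gevrDensity_eq (r : ℕ) (hr : 0 < r) : gevrDensity μ σ ξ r =
    (gevDom μ σ ξ r).indicator (fun x => (σ ^ r)⁻¹ * Real.exp
      (-(1 + ξ * ((x ⟨r - 1, Nat.sub_lt hr Nat.one_pos⟩ - μ) / σ)) ^ (-1 / ξ)
        - (1 / ξ + 1) * ∑ j, Real.log (1 + ξ * ((x j - μ) / σ)))) := by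
  funext x
  unfold gevrDensity
  by_cases hx : x ∈ gevDom μ σ ξ r
  · rw [indicator_of_mem hx, dif_pos ⟨hr, hx⟩]
  · rw [indicator_of_notMem hx, dif_neg (fun h => hx h.2)]

lemma gevrDensity_measurable (r : ℕ) (hr : 0 < r) : Measurable (gevrDensity μ σ ξ r) := by
  rw [gevrDensity_eq μ σ ξ r hr]
  refine Measurable.indicator ?_ (measurableSet_gevDom μ σ ξ r)
  fun_prop

lemma gevr_expect (hσ : 0 < σ) (hξ : ξ ≠ 0) (r : ℕ) (hr : 0 < r) (g : (Fin r → ℝ) → ℝ) :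
    ∫ x, g x ∂(gevrMeasure μ σ ξ r) =
      ∫ u in chamber r, Real.exp (-u ⟨r - 1, Nat.sub_lt hr Nat.one_pos⟩) *
        g (fun i => gq μ σ ξ (u i)) := by
  have hnn : ∀ x, 0 ≤ gevrDensity μ σ ξ r x := by
    intro x
    rw [gevrDensity_eq μ σ ξ r hr]
    exact indicator_nonneg (fun x _ => by positivity) x
  unfold gevrMeasure
  rw [integral_withDensity_eq_integral_toReal_smul
    (gevrDensity_measurable μ σ ξ r hr).ennreal_ofReal (by simp)]
  simp only [ENNReal.toReal_ofReal (hnn _)]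
  rw [← setIntegral_eq_integral_of_forall_compl_eq_zero (s := gevDom μ σ ξ r)
    (fun x hx => by rw [gevrDensity_eq μ σ ξ r hr, indicator_of_notMem hx, zero_smul])]
  rw [gevDom_image μ σ ξ hσ hξ r]
  have hder : ∀ u ∈ chamber r, HasFDerivWithinAt (fun u : Fin r → ℝ => fun i => gq μ σ ξ (u i))
      (ContinuousLinearMap.pi fun i =>
        (ContinuousLinearMap.toSpanSingleton ℝ (-σ * u i ^ (-ξ - 1))).comp
          (ContinuousLinearMap.proj (R := ℝ) (φ := fun _ : Fin r => ℝ) i)) (chamber r) u := by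
    intro u hu
    rw [hasFDerivWithinAt_pi]
    intro i
    have h1 := (gq_deriv μ σ ξ hξ (u i) (hu.2 i)).hasFDerivAt
    exact (h1.comp u (ContinuousLinearMap.proj (R := ℝ) (φ := fun _ : Fin r => ℝ) i).hasFDerivAt).hasFDerivWithinAt
  have hinj : InjOn (fun u : Fin r → ℝ => fun i => gq μ σ ξ (u i)) (chamber r) := by
    intro u hu v hv huv
    funext i
    exact (gq_anti μ σ ξ hσ hξ).injOn (hu.2 i) (hv.2 i) (congrFun huv i)
  rw [integral_image_eq_integral_abs_det_fderiv_smul volume (measurableSet_chamber r) hder hinj]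
  refine setIntegral_congr_fun (measurableSet_chamber r) fun u hu => ?_
  have hmem : (fun i => gq μ σ ξ (u i)) ∈ gevDom μ σ ξ r := by
    rw [gevDom_image μ σ ξ hσ hξ r]; exact ⟨u, hu, rfl⟩
  rw [ContinuousLinearMap.det_pi, gevrDensity_eq μ σ ξ r hr, indicator_of_mem hmem]
  simp only [gq_w μ σ ξ hσ hξ, smul_eq_mul]
  rw [← mul_assoc]
  congr 1
  have hdet : ∀ i : Fin r,
      (ContinuousLinearMap.toSpanSingleton ℝ (-σ * u i ^ (-ξ - 1))).det = -σ * u i ^ (-ξ - 1) := by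
    intro i
    simp [ContinuousLinearMap.det]
  simp only [hdet]
  rw [← Real.rpow_mul (hu.2 _).le, show -ξ * (-1 / ξ) = 1 by field_simp, Real.rpow_one,
    Finset.abs_prod]
  have e1 : ∀ i, |-σ * u i ^ (-ξ - 1)| = σ * Real.exp (Real.log (u i) * (-ξ - 1)) := by
    intro i
    rw [abs_mul, abs_neg, abs_of_pos hσ, abs_of_pos (Real.rpow_pos_of_pos (hu.2 i) _),
      Real.rpow_def_of_pos (hu.2 i)]
  simp only [e1]
  rw [Finset.prod_mul_distrib, ← Real.exp_sum, Finset.prod_const, Finset.card_univ, Fintype.card_fin]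
  have e2 : ∀ i, Real.log (u i ^ (-ξ)) = -ξ * Real.log (u i) := fun i => Real.log_rpow (hu.2 i) _
  simp only [e2, ← Finset.mul_sum, ← Finset.sum_mul]
  rw [mul_mul_mul_comm, mul_inv_cancel₀ (pow_pos hσ r).ne', one_mul, ← Real.exp_add]
  congr 1
  field_simp
  ring

lemma gevr_zero (hσ : 0 < σ) (hξ : ξ ≠ 0) (r : ℕ) (hr : 0 < r) (g : (Fin r → ℝ) → ℝ)
    {h h' : ℝ → ℝ} (H : GoodPair h h')
    (hg : ∀ u ∈ chamber r, g (fun i => gq μ σ ξ (u i)) =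
      (∑ j, h' (u j)) - h (u ⟨r - 1, Nat.sub_lt hr Nat.one_pos⟩)) :
    ∫ x, g x ∂(gevrMeasure μ σ ξ r) = 0 := by
  rw [gevr_expect μ σ ξ hσ hξ r hr, ← chamber_integral H r]
  refine setIntegral_congr_fun (measurableSet_chamber r) fun u hu => ?_
  beta_reduce
  rw [symScore_chamber h h' r hr u hu, hg u hu, mul_comm]

end

lemma score_hasDeriv (r : ℕ) (l : Fin r) (a p q : ℝ → ℝ) (w : Fin r → ℝ → ℝ) (s b p' q' : ℝ)
    (w' : Fin r → ℝ) (ha : HasDerivAt a (r * b) s) (hp : HasDerivAt p p' s)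
    (hq : HasDerivAt q q' s) (hw : ∀ j, HasDerivAt (w j) (w' j) s) (hpos : ∀ j, 0 < w j s)
    (u : Fin r → ℝ) (h h' : ℝ → ℝ)
    (h1 : ∀ j, b - q' * Real.log (w j s) - q s * (w' j / w j s) = h' (u j))
    (h2 : w' l * p s * w l s ^ (p s - 1) + p' * w l s ^ p s * Real.log (w l s) = h (u l)) :
    deriv (fun s => a s - w l s ^ p s - q s * ∑ j, Real.log (w j s)) s =
      (∑ j, h' (u j)) - h (u l) := by
  have hs : HasDerivAt (fun s => ∑ j, Real.log (w j s)) (∑ j, w' j / w j s) s :=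
    HasDerivAt.fun_sum fun j _ => (hw j).log (hpos j).ne'
  have := (ha.sub ((hw l).rpow hp (hpos l))).sub (hq.mul hs)
  refine this.deriv.trans ?_
  rw [h2]
  simp only [← h1, Finset.sum_sub_distrib, ← Finset.mul_sum, Finset.sum_const, Finset.card_univ,
    Fintype.card_fin, nsmul_eq_mul]
  ring

/-- for `ξ > −1/2`, `ξ ≠ 0`, the score of the GEV_r model has
expectation zero under the GEV_r distribution, for each of the three
parameters `μ`, `σ`, `ξ`. -/
theorem gevr_score_mean_zero
    (μ σ ξ : ℝ) (hσ : 0 < σ) (hξhalf : -(1 / 2) < ξ) (hξ : ξ ≠ 0)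
    (r : ℕ) (hr : 1 ≤ r) :
    (∫ x : Fin r → ℝ, deriv (fun μ' => gevrLogLik r x μ' σ ξ) μ
        ∂(gevrMeasure μ σ ξ r)) = 0 ∧
    (∫ x : Fin r → ℝ, deriv (fun σ' => gevrLogLik r x μ σ' ξ) σ
        ∂(gevrMeasure μ σ ξ r)) = 0 ∧
    (∫ x : Fin r → ℝ, deriv (fun ξ' => gevrLogLik r x μ σ ξ') ξ
        ∂(gevrMeasure μ σ ξ r)) = 0 := by
  have hr0 : 0 < r := hr
  have G1 := goodPair_rpow 1 one_pos
  have Gx := goodPair_rpow (1 + ξ) (by linarith)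
  have Glog := goodPair_mul_log
  have W := gq_w μ σ ξ hσ hξ
  have Wpos : ∀ t : ℝ, 0 < t → 0 < 1 + ξ * ((gq μ σ ξ t - μ) / σ) := fun t ht => by
    rw [W]; exact Real.rpow_pos_of_pos ht _
  have P1 : ∀ t : ℝ, 0 < t → (t ^ (-ξ)) ^ (-1 / ξ) = t := fun t ht => by
    rw [← Real.rpow_mul ht.le, show -ξ * (-1 / ξ) = 1 by field_simp, Real.rpow_one]
  have P2 : ∀ t : ℝ, 0 < t → (t ^ (-ξ)) ^ (-1 / ξ - 1) = t * t ^ ξ := fun t ht => by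
    rw [← Real.rpow_mul ht.le, show -ξ * (-1 / ξ - 1) = 1 + ξ by field_simp; ring,
      Real.rpow_add ht, Real.rpow_one]
  have P3 : ∀ t : ℝ, 0 < t → t ^ (-ξ) = (t ^ ξ)⁻¹ := fun t ht => Real.rpow_neg ht.le _
  have P4 : ∀ t : ℝ, 0 < t → Real.log (t ^ (-ξ)) = -ξ * Real.log t :=
    fun t ht => Real.log_rpow ht _
  have P5 : ∀ t : ℝ, 0 < t → t ^ (1 + ξ) = t * t ^ ξ := fun t ht => by
    rw [Real.rpow_add ht, Real.rpow_one]
  have Z : ∀ t : ℝ, (gq μ σ ξ t - μ) / σ = (t ^ (-ξ) - 1) / ξ := fun t => by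
    unfold gq; field_simp; ring
  refine ⟨?_, ?_, ?_⟩
  · refine gevr_zero μ σ ξ hσ hξ r hr0 _ (Gx.const_mul σ⁻¹) fun u hu => ?_
    simp only [gevrLogLik, dif_pos hr0]
    refine score_hasDeriv r ⟨r - 1, Nat.sub_lt hr0 Nat.one_pos⟩ (fun _ => -(r:ℝ) * Real.log σ)
      (fun _ => -1 / ξ) (fun _ => 1 / ξ + 1)
      (fun j μ' => 1 + ξ * ((gq μ σ ξ (u j) - μ') / σ)) μ 0 0 0 (fun _ => ξ * ((-1) / σ))
      ?_ (hasDerivAt_const _ _) (hasDerivAt_const _ _) ?_ (fun j => Wpos _ (hu.2 j)) u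
      (fun t => σ⁻¹ * t ^ (1 + ξ)) (fun t => σ⁻¹ * ((1 + ξ) * t ^ (1 + ξ - 1))) ?_ ?_
    · simpa using hasDerivAt_const μ (-(r:ℝ) * Real.log σ)
    · intro j
      exact ((((hasDerivAt_id μ).const_sub _).div_const σ).const_mul ξ).const_add 1
    · intro j
      have ht := hu.2 j
      have hp := Real.rpow_pos_of_pos ht ξ
      simp only [W, P3 _ ht, add_sub_cancel_left]
      field_simp
      ring
    · have ht := hu.2 ⟨r - 1, Nat.sub_lt hr0 Nat.one_pos⟩
      simp only [W, P2 _ ht, P5 _ ht]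
      field_simp
      ring
  · refine gevr_zero μ σ ξ hσ hξ r hr0 _ ((G1.const_mul (ξ * σ)⁻¹).add
      (Gx.const_mul (-(ξ * σ)⁻¹))) fun u hu => ?_
    simp only [gevrLogLik, dif_pos hr0]
    refine score_hasDeriv r ⟨r - 1, Nat.sub_lt hr0 Nat.one_pos⟩ (fun s => -(r:ℝ) * Real.log s)
      (fun _ => -1 / ξ) (fun _ => 1 / ξ + 1)
      (fun j s => 1 + ξ * ((gq μ σ ξ (u j) - μ) / s)) σ (-σ⁻¹) 0 0
      (fun j => -(u j ^ (-ξ) - 1) / σ)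
      ?_ (hasDerivAt_const _ _) (hasDerivAt_const _ _) ?_ (fun j => Wpos _ (hu.2 j)) u
      (fun t => (ξ * σ)⁻¹ * t ^ (1:ℝ) + -(ξ * σ)⁻¹ * t ^ (1 + ξ))
      (fun t => (ξ * σ)⁻¹ * (1 * t ^ ((1:ℝ) - 1)) + -(ξ * σ)⁻¹ * ((1 + ξ) * t ^ (1 + ξ - 1))) ?_ ?_
    · refine ((Real.hasDerivAt_log hσ.ne').const_mul _).congr_deriv ?_
      ring
    · intro j
      have := ((((hasDerivAt_inv hσ.ne').const_mul (gq μ σ ξ (u j) - μ))).const_mul ξ).const_add 1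
      simp only [← div_eq_mul_inv] at this
      refine this.congr_deriv ?_
      rw [← W]
      field_simp
      ring
    · intro j
      have ht := hu.2 j
      have hp := Real.rpow_pos_of_pos ht ξ
      simp only [W, P3 _ ht, add_sub_cancel_left, sub_self, Real.rpow_zero]
      field_simp
      ring
    · have ht := hu.2 ⟨r - 1, Nat.sub_lt hr0 Nat.one_pos⟩
      have hp := Real.rpow_pos_of_pos ht ξ
      simp only [W, P2 _ ht, P5 _ ht, Real.rpow_one]
      simp only [P3 _ ht]
      field_simp
      ring
  · refine gevr_zero μ σ ξ hσ hξ r hr0 _ (((G1.const_mul (-(ξ ^ 2)⁻¹)).add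
      (Gx.const_mul ((ξ ^ 2)⁻¹))).add (Glog.const_mul (-ξ⁻¹))) fun u hu => ?_
    simp only [gevrLogLik, dif_pos hr0]
    refine score_hasDeriv r ⟨r - 1, Nat.sub_lt hr0 Nat.one_pos⟩ (fun _ => -(r:ℝ) * Real.log σ)
      (fun s => -1 / s) (fun s => 1 / s + 1)
      (fun j s => 1 + s * ((gq μ σ ξ (u j) - μ) / σ)) ξ 0 (ξ ^ 2)⁻¹ (-(ξ ^ 2)⁻¹)
      (fun j => (u j ^ (-ξ) - 1) / ξ)
      ?_ ?_ ?_ ?_ (fun j => Wpos _ (hu.2 j)) u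
      (fun t => -(ξ ^ 2)⁻¹ * t ^ (1:ℝ) + (ξ ^ 2)⁻¹ * t ^ (1 + ξ) + -ξ⁻¹ * (t * Real.log t))
      (fun t => -(ξ ^ 2)⁻¹ * (1 * t ^ ((1:ℝ) - 1)) + (ξ ^ 2)⁻¹ * ((1 + ξ) * t ^ (1 + ξ - 1))
        + -ξ⁻¹ * (Real.log t + 1)) ?_ ?_
    · simpa using hasDerivAt_const ξ (-(r:ℝ) * Real.log σ)
    · have := (hasDerivAt_inv hξ).const_mul (-1)
      simp only [← div_eq_mul_inv] at this
      exact this.congr_deriv (by ring)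
    · have := (hasDerivAt_inv hξ).add_const 1
      simpa only [one_div] using this
    · intro j
      rw [← Z]
      simpa using ((hasDerivAt_id ξ).mul_const ((gq μ σ ξ (u j) - μ) / σ)).const_add 1
    · intro j
      have ht := hu.2 j
      have hp := Real.rpow_pos_of_pos ht ξ
      simp only [W, P4 _ ht, add_sub_cancel_left, sub_self, Real.rpow_zero]
      simp only [P3 _ ht]
      field_simp
      ring
    · have ht := hu.2 ⟨r - 1, Nat.sub_lt hr0 Nat.one_pos⟩
      have hp := Real.rpow_pos_of_pos ht ξ
      simp only [W, P2 _ ht, P5 _ ht, P1 _ ht, P4 _ ht, Real.rpow_one]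
      simp only [P3 _ ht]
      field_simp
      ring
end
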